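/- For |q| < 1 and z a nonzero complex number such that none of the theta functions or Appell–Lerch series appearing is singular (in particular z, z², z³ are not integer powers of q), z·j(z^{-1}q;q)·m(q,q³,z) + z·j(z^{-2}q;q)·m(z³q,q³,z^{-1}) + z²·j(zq;q)·m(q,q³,z^{-1}) + z²·j(z²q;q)·m(z^{-3}q,q³,z) = −j(z²;q)·m(z^{-3}q,q³,z²) + z·j(z²;q)·m(z³q,q³,z^{-2}). -/

import Mathlib

/-! Write `θ(w) = j(w;q)`. The proof is an application of Liouville's theorem to quasi-periodic
holomorphic functions on the punctured plane.

* `quasi_proportional`: if `H` vanishes at the zeros of `J`, which are simple, and `H`, `J` have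
  the same multiplier under `x ↦ q x`, then `H / J` descends to a bounded entire function after
  composition with `exp`, so it is constant. The same argument works when the multiplier of `H / J`
  is `-x`, and the constant is then `0`.
* `weierstrass`: the three-term theta relation, as a relation between functions of one variable.
* `mAL_diff`: the difference `m(x,q,z₁) - m(x,q,z₀)` is
  `-z₀ θ'(1) θ(z₁/z₀) θ(x z₀ z₁) / (θ(z₀) θ(z₁) θ(x z₀) θ(x z₁))`. The combination of Appell–Lerch
  series on the left is multiplied by `-x` under `x ↦ q x`, because the inhomogeneous terms of the
  functional equation (`lerch_shift`) are theta series and cancel; the poles and residues of the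
  two sides agree (`lerch_ext`).

By `j(q/z;q) = j(z;q)` and `j(qz;q) = -z⁻¹ j(z;q)` the identity involves only three differences
`m(x,q³,z₁) - m(x,q³,z₀)` with `x = q`, `z³ q`, `z⁻³ q`, and in all three `x z₀ z₁ = q`. After
inserting `mAL_diff` and splitting `j(z;q)` and `j(z²;q)` into theta functions of nome `q³`
(`jTheta_split`), what is left is one instance of the Weierstrass relation (`cubic_relation`).
-/

/-- The q-Pochhammer symbol `(a;q)_∞ = ∏_{k≥0} (1 - a q^k)`. -/
noncomputable def qPochInf (a q : ℂ) : ℂ := ∏' k : ℕ, (1 - a * q ^ k)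

/-- The theta function `j(z;q) = (z;q)_∞ (q/z;q)_∞ (q;q)_∞`. -/
noncomputable def jTheta (z q : ℂ) : ℂ := qPochInf z q * qPochInf (q / z) q * qPochInf q q

/-- The Appell–Lerch series
`m(x,q,z) = (1/j(z;q)) Σ_{r∈ℤ} (−1)^r q^{r(r−1)/2} z^r / (1 − q^{r−1} x z)`. -/
noncomputable def mAL (x q z : ℂ) : ℂ :=
  (jTheta z q)⁻¹ *
    ∑' r : ℤ, (-1 : ℂ) ^ r * q ^ (r * (r - 1) / 2) * z ^ r / (1 - q ^ (r - 1) * x * z)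

open Filter Topology Set

/-! ### The theta function -/

lemma summable_qPoch (a : ℂ) {q : ℂ} (hq : ‖q‖ < 1) :
    Summable fun k : ℕ => ‖-(a * q ^ k)‖ := by
  simpa using (summable_geometric_of_lt_one (norm_nonneg q) hq).mul_left ‖a‖

lemma multipliable_qPoch (a : ℂ) {q : ℂ} (hq : ‖q‖ < 1) :
    Multipliable fun k : ℕ => 1 - a * q ^ k := by
  simpa [sub_eq_add_neg] using multipliable_one_add_of_summable (summable_qPoch a hq)

lemma qPochInf_step (a : ℂ) {q : ℂ} (hq : ‖q‖ < 1) :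
    qPochInf a q = (1 - a) * qPochInf (q * a) q := by
  unfold qPochInf
  have h : ∀ k : ℕ, 1 - q * a * q ^ k = 1 - a * q ^ (k + 1) := fun k => by ring
  simp_rw [h]
  have hm : Multipliable fun k : ℕ => 1 - a * q ^ (k + 1) := by
    simpa only [h] using multipliable_qPoch (q * a) hq
  rw [tprod_eq_zero_mul' (f := fun k : ℕ => 1 - a * q ^ k) hm, pow_zero, mul_one]

lemma qPochInf_ne_zero {a q : ℂ} (hq : ‖q‖ < 1) (h : ∀ k : ℕ, a * q ^ k ≠ 1) :
    qPochInf a q ≠ 0 := by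
  have := tprod_one_add_ne_zero_of_summable (f := fun k : ℕ => -(a * q ^ k))
    (fun k hk => h k (by linear_combination -hk)) (summable_qPoch a hq)
  simpa [qPochInf, sub_eq_add_neg] using this

lemma qPochInf_self_ne_zero {q : ℂ} (hq : ‖q‖ < 1) : qPochInf q q ≠ 0 := by
  refine qPochInf_ne_zero hq fun k hk => ?_
  have : ‖q‖ ^ (k + 1) = 1 := by rw [← norm_pow, pow_succ', hk, norm_one]
  exact (pow_lt_one₀ (norm_nonneg q) hq (by omega)).ne this

lemma differentiable_qPochInf {q : ℂ} (hq : ‖q‖ < 1) :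
    Differentiable ℂ fun a => qPochInf a q := by
  intro a
  have hu := (summable_geometric_of_lt_one (norm_nonneg q) hq).mul_left (‖a‖ + 1)
  have h := hu.hasProdLocallyUniformlyOn_nat_one_add
    (f := fun k (x : ℂ) => -(x * q ^ k)) (K := Metric.ball a 1) Metric.isOpen_ball
    (.of_forall fun k x hx => by
      have : ‖x‖ ≤ ‖a‖ + 1 := by
        have := norm_sub_norm_le x a
        rw [mem_ball_iff_norm] at hx
        linarith
      simpa using mul_le_mul_of_nonneg_right this (by positivity)) (fun k => by fun_prop)
  have h2 := h.differentiableOn (.of_forall fun _ ↦ by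
    simpa [Finset.prod_fn] using DifferentiableOn.finsetProd (fun _ _ ↦ by fun_prop))
      Metric.isOpen_ball
  have h3 := h2.differentiableAt (Metric.isOpen_ball.mem_nhds (Metric.mem_ball_self one_pos))
  simpa [qPochInf, sub_eq_add_neg] using h3

lemma jTheta_eq {z q : ℂ} (hq : ‖q‖ < 1) : jTheta z q =
    (1 - z) * (qPochInf (q * z) q * qPochInf (q / z) q * qPochInf q q) := by
  rw [jTheta, qPochInf_step z hq]; ring

lemma jTheta_mul {z q : ℂ} (hq : ‖q‖ < 1) (hq0 : q ≠ 0) (hz : z ≠ 0) :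
    jTheta (q * z) q = -z⁻¹ * jTheta z q := by
  have h : q * (q / (q * z)) = q / z := by field_simp
  rw [jTheta_eq (z := z) hq, jTheta, qPochInf_step (q / (q * z)) hq, h]
  field_simp
  ring

lemma jTheta_inv {z q : ℂ} (hq : ‖q‖ < 1) (hz : z ≠ 0) :
    jTheta z⁻¹ q = -z⁻¹ * jTheta z q := by
  rw [jTheta_eq hq, jTheta_eq hq]
  have h1 : q * z⁻¹ = q / z := by field_simp
  have h2 : q / z⁻¹ = q * z := by field_simp
  rw [h1, h2]
  field_simp
  ring

lemma jTheta_div {z q : ℂ} (hq0 : q ≠ 0) : jTheta (q / z) q = jTheta z q := by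
  have h : q / (q / z) = z := by field_simp
  rw [jTheta, jTheta, h]; ring

lemma jTheta_one {q : ℂ} (hq : ‖q‖ < 1) : jTheta 1 q = 0 := by
  rw [jTheta_eq hq]; simp

lemma jTheta_zero_imp {z q : ℂ} (hq : ‖q‖ < 1) (hq0 : q ≠ 0) (hz : z ≠ 0)
    (h : jTheta z q = 0) : ∃ k : ℤ, z = q ^ k := by
  by_contra! hk
  refine absurd h (mul_ne_zero (mul_ne_zero ?_ ?_) (qPochInf_self_ne_zero hq))
  · refine qPochInf_ne_zero hq fun k h1 => hk (-k) ?_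
    rw [zpow_neg, zpow_natCast]
    exact eq_inv_of_mul_eq_one_left h1
  · refine qPochInf_ne_zero hq fun k h1 => hk (k + 1) ?_
    rw [zpow_add_one₀ hq0, zpow_natCast]
    field_simp at h1
    linear_combination -h1

lemma jTheta_differentiableOn {q : ℂ} (hq : ‖q‖ < 1) :
    DifferentiableOn ℂ (fun z => jTheta z q) {0}ᶜ := by
  have h := differentiable_qPochInf hq
  have h2 : DifferentiableOn ℂ (fun z => qPochInf (q / z) q) {0}ᶜ :=
    h.comp_differentiableOn (f := fun z => q / z) (by
      refine (differentiableOn_const _).div differentiableOn_id fun x hx => by simpa using hx)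
  exact (h.differentiableOn.mul h2).mul_const _

lemma jTheta_differentiableAt {q z : ℂ} (hq : ‖q‖ < 1) (hz : z ≠ 0) :
    DifferentiableAt ℂ (fun z => jTheta z q) z :=
  (jTheta_differentiableOn hq).differentiableAt (isOpen_compl_singleton.mem_nhds (by simpa))

/-- A property of nonzero complex numbers invariant under multiplication by `q` is invariant
under multiplication by all integer powers of `q`. -/
lemma zpow_invariant {q : ℂ} (hq0 : q ≠ 0) {P : ℂ → Prop}
    (h : ∀ w, w ≠ 0 → (P (q * w) ↔ P w)) (k : ℤ) {w : ℂ} (hw : w ≠ 0) :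
    P (q ^ k * w) ↔ P w := by
  induction k with
  | zero => simp
  | succ n ih =>
    rw [← ih, ← h (q ^ (n : ℤ) * w) (mul_ne_zero (zpow_ne_zero _ hq0) hw), zpow_add_one₀ hq0,
      ← mul_assoc, mul_comm q]
  | pred n ih =>
    rw [← ih, ← h (q ^ (-(n : ℤ) - 1) * w) (mul_ne_zero (zpow_ne_zero _ hq0) hw),
      ← mul_assoc, ← zpow_one_add₀ hq0, add_sub_cancel]

lemma jTheta_deriv_one {q : ℂ} (hq : ‖q‖ < 1) :
    deriv (fun z => jTheta z q) 1 ≠ 0 := by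
  have h := differentiable_qPochInf hq
  have h2 : DifferentiableAt ℂ
      (fun z => qPochInf (q * z) q * qPochInf (q / z) q * qPochInf q q) 1 := by
    refine DifferentiableAt.mul_const (DifferentiableAt.mul ?_ ?_) _
    · exact (h _).comp (f := fun z => q * z) 1 (by fun_prop)
    · exact (h _).comp (f := fun z => q / z) 1 (by fun_prop (disch := simp))
  have h3 : (fun z => jTheta z q) = fun z => (1 - z) *
      (qPochInf (q * z) q * qPochInf (q / z) q * qPochInf q q) := by
    ext z; exact jTheta_eq hq
  rw [h3, deriv_fun_mul (by fun_prop) h2]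
  simp [qPochInf_self_ne_zero hq]

/-- Every zero of the theta function on the punctured plane is simple. -/
lemma jTheta_simple {q : ℂ} (hq : ‖q‖ < 1) (hq0 : q ≠ 0) {z : ℂ} (hz : z ≠ 0)
    (h : jTheta z q = 0) : deriv (fun z => jTheta z q) z ≠ 0 := by
  obtain ⟨k, rfl⟩ := jTheta_zero_imp hq hq0 hz h
  -- Simplicity of a zero is invariant under `w ↦ q w`, so the zero `1` suffices.
  have key : ∀ w, w ≠ 0 → ((jTheta (q * w) q = 0 → deriv (fun z => jTheta z q) (q * w) ≠ 0) ↔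
      (jTheta w q = 0 → deriv (fun z => jTheta z q) w ≠ 0)) := by
    intro w hw
    have hqw : q * w ≠ 0 := mul_ne_zero hq0 hw
    have e1 := jTheta_mul hq hq0 hw
    have e2 : jTheta (q * w) q = 0 ↔ jTheta w q = 0 := by simp [e1, hw]
    rw [e2]
    refine forall_congr' fun h0 => not_congr ?_
    have e3 : (fun z => jTheta z q) =ᶠ[𝓝 w] fun z => -z * jTheta (q * z) q := by
      filter_upwards [isOpen_compl_singleton.mem_nhds (show w ∈ ({0} : Set ℂ)ᶜ by simpa)]
        with z hz
      have hz : z ≠ 0 := by simpa using hz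
      rw [jTheta_mul hq hq0 hz]; field_simp
    have d1 : HasDerivAt (fun z => jTheta (q * z) q)
        (deriv (fun z => jTheta z q) (q * w) * q) w := by
      have := (jTheta_differentiableAt hq hqw).hasDerivAt
      simpa [Function.comp_def] using! this.comp w ((hasDerivAt_id w).const_mul q)
    have d2 := ((hasDerivAt_neg w).mul d1).congr_of_eventuallyEq e3
    rw [d2.deriv, e2.2 h0]
    simp [hw, hq0]
  have := (zpow_invariant hq0 (P := fun w => jTheta w q = 0 → deriv (fun z => jTheta z q) w ≠ 0)
    key k one_ne_zero).2 fun _ => jTheta_deriv_one hq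
  rw [mul_one] at this
  exact this h

/-- The theta function of nome `q` splits into three theta functions of nome `q ^ 3`. -/
lemma jTheta_split {q z : ℂ} (hq : ‖q‖ < 1) (hq0 : q ≠ 0) :
    jTheta z q * qPochInf (q ^ 3) (q ^ 3) ^ 3 = qPochInf q q *
      (jTheta z (q ^ 3) * jTheta (q * z) (q ^ 3) * jTheta (q / z) (q ^ 3)) := by
  have hq3 : ‖q ^ 3‖ < 1 := by
    rw [norm_pow]; exact pow_lt_one₀ (norm_nonneg q) hq (by norm_num)
  have key : ∀ a : ℂ, qPochInf a q =
      qPochInf a (q ^ 3) * qPochInf (q * a) (q ^ 3) * qPochInf (q ^ 2 * a) (q ^ 3) := by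
    intro a
    unfold qPochInf
    -- Group the factors of `(a;q)_∞` by the exponent modulo `3`.
    rw [← (multipliable_qPoch a hq3).tprod_mul (multipliable_qPoch _ hq3),
      ← ((multipliable_qPoch a hq3).mul (multipliable_qPoch _ hq3)).tprod_mul
        (multipliable_qPoch _ hq3), ← (Nat.divModEquiv 3).symm.tprod_eq]
    have hm := (Nat.divModEquiv 3).symm.multipliable_iff.2 (multipliable_qPoch a hq)
    have hm2 : HasProd _ _ := hm.hasProd
    have := hm2.prod_fiberwise (fun b => hasProd_fintype _)
    refine this.tprod_eq.symm.trans ?_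
    refine tprod_congr fun b => ?_
    simp [Fin.prod_univ_three, Nat.divModEquiv]
    ring
  -- The factors of `(q/z;q)_∞` are those of the partners `q³/w` of `w = z, q z, q/z`, permuted.
  unfold jTheta
  rw [key z, key (q / z)]
  have e1 : q ^ 3 / (q * z) = q ^ 2 * z⁻¹ := by field_simp
  have e2 : q ^ 3 / (q / z) = q ^ 2 * z := by field_simp
  have e3 : q * (q / z) = q ^ 2 * z⁻¹ := by field_simp
  have e4 : q ^ 2 * (q / z) = q ^ 3 / z := by field_simp
  rw [e1, e2, e3, e4]
  ring

/-! ### Quasi-periodic holomorphic functions on the punctured plane -/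

/-- A holomorphic `H` vanishing at all (simple) zeros of `J` is holomorphically divisible
by `J`. -/
lemma exists_quotient {H J : ℂ → ℂ} (hH : DifferentiableOn ℂ H {0}ᶜ)
    (hJ : DifferentiableOn ℂ J {0}ᶜ) (hs : ∀ x, x ≠ 0 → J x = 0 → deriv J x ≠ 0)
    (h0 : ∀ x, x ≠ 0 → J x = 0 → H x = 0) :
    ∃ R : ℂ → ℂ, DifferentiableOn ℂ R {0}ᶜ ∧ ∀ x, x ≠ 0 → H x = R x * J x := by
  classical
  -- The first branch is the removable value of `H / J`; near a zero of `J` the quotient is the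
  -- quotient of the difference slopes.
  refine ⟨fun x => if J x = 0 then deriv H x / deriv J x else H x / J x, ?_, ?_⟩
  · intro x hx
    have hx' : x ≠ 0 := by simpa using hx
    have hn : ({0}ᶜ : Set ℂ) ∈ 𝓝 x := isOpen_compl_singleton.mem_nhds hx
    refine DifferentiableAt.differentiableWithinAt ?_
    by_cases hJx : J x = 0
    · have d1 := ((Complex.differentiableOn_dslope hn).2 hH).differentiableAt hn
      have d2 := ((Complex.differentiableOn_dslope hn).2 hJ).differentiableAt hn
      have hne : dslope J x x ≠ 0 := by rw [dslope_same]; exact hs x hx' hJx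
      refine (d1.div d2 hne).congr_of_eventuallyEq ?_
      filter_upwards [d2.continuousAt.eventually_ne hne] with y hy
      rcases eq_or_ne y x with rfl | hyx
      · simp [hJx, dslope_same]
      · have hyx' : y - x ≠ 0 := sub_ne_zero.2 hyx
        rw [dslope_of_ne _ hyx, slope_def_field, hJx, sub_zero] at hy
        have : J y ≠ 0 := fun h => hy (by simp [h])
        simp only [Pi.div_apply]
        rw [if_neg this, dslope_of_ne _ hyx, dslope_of_ne _ hyx, slope_def_field,
          slope_def_field, hJx, h0 x hx' hJx]
        field_simp
        ring
    · have d1 := (hH.differentiableAt hn).div (hJ.differentiableAt hn) hJx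
      refine d1.congr_of_eventuallyEq ?_
      filter_upwards [(hJ.differentiableAt hn).continuousAt.eventually_ne hJx] with y hy
      simp [hy]
  · intro x hx
    by_cases hJx : J x = 0
    · simp [hJx, h0 x hx hJx]
    · simp [hJx]

/-- Two continuous functions on the punctured plane that agree where `J ≠ 0` agree everywhere,
because simple zeros are isolated. -/
lemma eq_of_eq_off_zeros {F G J : ℂ → ℂ} (hF : ContinuousOn F {0}ᶜ) (hG : ContinuousOn G {0}ᶜ)
    (hJ : DifferentiableOn ℂ J {0}ᶜ) (hs : ∀ x, x ≠ 0 → J x = 0 → deriv J x ≠ 0)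
    (h : ∀ x, x ≠ 0 → J x ≠ 0 → F x = G x) {x : ℂ} (hx : x ≠ 0) : F x = G x := by
  by_cases hJx : J x = 0
  · have hn : ({0}ᶜ : Set ℂ) ∈ 𝓝 x := isOpen_compl_singleton.mem_nhds (by simpa)
    have h1 := (hJ.differentiableAt hn).hasDerivAt.eventually_ne (c := 0) (hs x hx hJx)
    have h2 : F =ᶠ[𝓝[≠] x] G := by
      filter_upwards [h1, mem_nhdsWithin_of_mem_nhds hn] with y hy hy0
      exact h y (by simpa using hy0) hy
    exact tendsto_nhds_unique_of_eventuallyEq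
      ((hF.continuousAt hn).tendsto.mono_left nhdsWithin_le_nhds)
      ((hG.continuousAt hn).tendsto.mono_left nhdsWithin_le_nhds) h2
  · exact h x hx hJx

/-- If multiplication of the variable by `q` does not increase `‖R‖` inside the unit disc and does
not decrease it outside, then `R` is bounded by its maximum over the fundamental annulus, and
`R ∘ exp` is a bounded entire function, so `R` is constant on the punctured plane. -/
lemma const_of_quasi {q : ℂ} (hq : ‖q‖ < 1) (hq0 : q ≠ 0) {R : ℂ → ℂ}
    (hR : DifferentiableOn ℂ R {0}ᶜ)
    (h1 : ∀ x, x ≠ 0 → ‖x‖ ≤ 1 → ‖R (q * x)‖ ≤ ‖R x‖)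
    (h2 : ∀ x, x ≠ 0 → 1 ≤ ‖x‖ → ‖R x‖ ≤ ‖R (q * x)‖) {x y : ℂ} (hx : x ≠ 0) (hy : y ≠ 0) :
    R x = R y := by
  have hqp : 0 < ‖q‖ := norm_pos_iff.2 hq0
  obtain ⟨M, hM⟩ : ∃ M, ∀ x : ℂ, ‖q‖ ≤ ‖x‖ → ‖x‖ ≤ 1 → ‖R x‖ ≤ M := by
    have hc : IsCompact (Metric.closedBall (0 : ℂ) 1 ∩ {x | ‖q‖ ≤ ‖x‖}) :=
      (isCompact_closedBall _ _).inter_right (isClosed_le continuous_const continuous_norm)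
    obtain ⟨M, hM⟩ := hc.exists_bound_of_continuousOn (f := R) (hR.continuousOn.mono (by
      rintro x ⟨-, hx⟩ h
      simp only [mem_singleton_iff] at h
      simp [h] at hx
      exact hq0 hx))
    exact ⟨M, fun x h h' => hM x ⟨by simpa using h', h⟩⟩
  have inner : ∀ n : ℕ, ∀ x : ℂ, ‖q‖ ^ (n + 1) ≤ ‖x‖ → ‖x‖ ≤ 1 → ‖R x‖ ≤ M := by
    intro n
    induction n with
    | zero => intro x h; exact hM x (by simpa using h)
    | succ n ih =>
      intro x h h'
      rcases le_total ‖q‖ ‖x‖ with hxq | hxq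
      · exact hM x hxq h'
      · have e : x = q * (x / q) := by field_simp
        have hx0 : x ≠ 0 := by
          rintro rfl
          have : 0 < ‖q‖ ^ (n + 1 + 1) := by positivity
          simp at h; linarith
        have h3 : ‖x / q‖ ≤ 1 := by rw [norm_div]; exact (div_le_one hqp).2 hxq
        rw [e]
        refine (h1 _ (div_ne_zero hx0 hq0) h3).trans (ih _ ?_ h3)
        rw [norm_div, le_div_iff₀ hqp, ← pow_succ]; exact h
  have hin : ∀ x : ℂ, x ≠ 0 → ‖x‖ ≤ 1 → ‖R x‖ ≤ M := by
    intro x hx hx1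
    obtain ⟨n, hn⟩ := exists_pow_lt_of_lt_one (norm_pos_iff.2 hx) hq
    refine inner n x (le_trans ?_ hn.le) hx1
    exact pow_le_pow_of_le_one hqp.le hq.le (Nat.le_succ n)
  have outer : ∀ n : ℕ, ∀ x : ℂ, x ≠ 0 → ‖q‖ ^ n * ‖x‖ ≤ 1 → ‖R x‖ ≤ M := by
    intro n
    induction n with
    | zero => intro x h0 h; exact hin x h0 (by simpa using h)
    | succ n ih =>
      intro x h0 h
      rcases le_total ‖x‖ 1 with hx1 | hx1
      · exact hin x h0 hx1
      · refine (h2 x h0 hx1).trans (ih _ (mul_ne_zero hq0 h0) ?_)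
        rw [norm_mul, ← mul_assoc, ← pow_succ]; exact h
  have hb : ∀ x : ℂ, x ≠ 0 → ‖R x‖ ≤ M := by
    intro x hx
    have hxp := norm_pos_iff.2 hx
    obtain ⟨n, hn⟩ := exists_pow_lt_of_lt_one (inv_pos.2 hxp) hq
    refine outer n x hx ?_
    rw [← le_div_iff₀ hxp, one_div]; exact hn.le
  have hd : Differentiable ℂ fun t => R (Complex.exp t) := fun t =>
    (hR.differentiableAt (isOpen_compl_singleton.mem_nhds (by simp))).comp t
      Complex.differentiable_exp.differentiableAt
  have hbd : Bornology.IsBounded (range fun t => R (Complex.exp t)) := by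
    refine isBounded_iff_forall_norm_le.2 ⟨M, ?_⟩
    rintro _ ⟨t, rfl⟩
    exact hb _ (Complex.exp_ne_zero t)
  have := hd.apply_eq_apply_of_bounded hbd (Complex.log x) (Complex.log y)
  simpa [Complex.exp_log hx, Complex.exp_log hy] using this

/-- If `H` vanishes at the (simple) zeros of `J` and the two have the same multiplier under
`x ↦ q x` up to a factor `c` which does not cross size `1` except on the unit circle,
then `H = K J` for a constant `K`; unless `c = 1` identically, `K = 0`. -/
lemma quasi_proportional {q : ℂ} (hq : ‖q‖ < 1) (hq0 : q ≠ 0) {H J c d : ℂ → ℂ}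
    (hH : DifferentiableOn ℂ H {0}ᶜ) (hJ : DifferentiableOn ℂ J {0}ᶜ)
    (hs : ∀ x, x ≠ 0 → J x = 0 → deriv J x ≠ 0)
    (h0 : ∀ x, x ≠ 0 → J x = 0 → H x = 0)
    (hc : Continuous c) (hc1 : ∀ x, ‖x‖ ≤ 1 → ‖c x‖ ≤ 1) (hc2 : ∀ x, 1 ≤ ‖x‖ → 1 ≤ ‖c x‖)
    (hd : ∀ x, x ≠ 0 → d x ≠ 0)
    (eH : ∀ x, x ≠ 0 → H (q * x) = c x * d x * H x)
    (eJ : ∀ x, x ≠ 0 → J (q * x) = d x * J x) :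
    ∃ K, (∀ x, x ≠ 0 → H x = K * J x) ∧ ∀ x, x ≠ 0 → K = c x * K := by
  obtain ⟨R, hR, e⟩ := exists_quotient hH hJ hs h0
  have eR : ∀ x, x ≠ 0 → R (q * x) = c x * R x := by
    intro x hx
    refine eq_of_eq_off_zeros (F := fun x => R (q * x)) (G := fun x => c x * R x) ?_
      (hc.continuousOn.mul hR.continuousOn) hJ hs ?_ hx
    · refine hR.continuousOn.comp (by fun_prop) fun y hy => ?_
      simpa [hq0] using hy
    · intro y hy hJy
      have h1 := eH y hy
      rw [e y hy, e (q * y) (mul_ne_zero hq0 hy), eJ y hy] at h1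
      have := mul_ne_zero (hd y hy) hJy
      refine mul_right_cancel₀ this ?_
      linear_combination h1
  have hconst : ∀ x y, x ≠ 0 → y ≠ 0 → R x = R y := fun x y hx hy =>
    const_of_quasi hq hq0 hR
      (fun x hx h => by
        rw [eR x hx, norm_mul]; exact mul_le_of_le_one_left (norm_nonneg _) (hc1 x h))
      (fun x hx h => by
        rw [eR x hx, norm_mul]; exact le_mul_of_one_le_left (norm_nonneg _) (hc2 x h)) hx hy
  refine ⟨R 1, fun x hx => ?_, fun x hx => ?_⟩
  · rw [e x hx, hconst x 1 hx one_ne_zero]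
  · have := eR x hx
    rwa [hconst x 1 hx one_ne_zero, hconst (q * x) 1 (mul_ne_zero hq0 hx) one_ne_zero] at this

/-! ### Products of two theta functions and the three-term relation -/

section Theta

variable {q : ℂ} (hq : ‖q‖ < 1) (hq0 : q ≠ 0)
include hq

lemma theta_mul_differentiableOn {a : ℂ} (ha : a ≠ 0) :
    DifferentiableOn ℂ (fun x => jTheta (a * x) q) {0}ᶜ :=
  (jTheta_differentiableOn hq).comp (f := fun x => a * x) (by fun_prop)
    fun x hx => by simpa [ha] using hx

lemma theta_mul_deriv {a x : ℂ} (ha : a ≠ 0) (hx : x ≠ 0) :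
    HasDerivAt (fun x => jTheta (a * x) q) (deriv (fun z => jTheta z q) (a * x) * a) x := by
  have := (jTheta_differentiableAt hq (mul_ne_zero ha hx)).hasDerivAt
  simpa [Function.comp_def] using! this.comp x ((hasDerivAt_id x).const_mul a)

include hq0

lemma jTheta_zpow_mul (k : ℤ) {w : ℂ} (hw : w ≠ 0) :
    jTheta (q ^ k * w) q = 0 ↔ jTheta w q = 0 :=
  zpow_invariant hq0 (P := fun w => jTheta w q = 0)
    (fun w hw => by simp [jTheta_mul hq hq0 hw, hw]) k hw

lemma jTheta_ne_zero {z : ℂ} (hz : z ≠ 0) (h : ∀ k : ℤ, z ≠ q ^ k) : jTheta z q ≠ 0 :=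
  fun h0 => let ⟨k, hk⟩ := jTheta_zero_imp hq hq0 hz h0; h k hk

/-- If `b / a` is not a power of `q`, then `θ(a x)` and `θ(b x)` have no common zero, so the zeros
of their product are simple. -/
lemma two_theta_simple {a b : ℂ} (ha : a ≠ 0) (hb : b ≠ 0) (hab : ∀ k : ℤ, b ≠ q ^ k * a)
    {x : ℂ} (hx : x ≠ 0) (h : jTheta (a * x) q * jTheta (b * x) q = 0) :
    deriv (fun x => jTheta (a * x) q * jTheta (b * x) q) x ≠ 0 := by
  have hax := mul_ne_zero ha hx
  have hbx := mul_ne_zero hb hx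
  have hnot : ¬ (jTheta (a * x) q = 0 ∧ jTheta (b * x) q = 0) := by
    rintro ⟨h1, h2⟩
    obtain ⟨m, hm⟩ := jTheta_zero_imp hq hq0 hax h1
    obtain ⟨n, hn⟩ := jTheta_zero_imp hq hq0 hbx h2
    refine hab (n - m) (mul_right_cancel₀ hx ?_)
    rw [mul_assoc, hm, hn, ← zpow_add₀ hq0, sub_add_cancel]
  rw [((theta_mul_deriv hq ha hx).fun_mul (theta_mul_deriv hq hb hx)).deriv]
  rcases mul_eq_zero.1 h with h1 | h1
  · have h2 : jTheta (b * x) q ≠ 0 := fun h2 => hnot ⟨h1, h2⟩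
    have := jTheta_simple hq hq0 hax h1
    simp [h1, h2, this, ha]
  · have h2 : jTheta (a * x) q ≠ 0 := fun h2 => hnot ⟨h2, h1⟩
    have := jTheta_simple hq hq0 hbx h1
    simp [h1, h2, this, hb]

lemma two_theta_quasi {a b x : ℂ} (ha : a ≠ 0) (hb : b ≠ 0) (hx : x ≠ 0) :
    jTheta (a * (q * x)) q * jTheta (b * (q * x)) q =
      (a * b * x ^ 2)⁻¹ * (jTheta (a * x) q * jTheta (b * x) q) := by
  rw [show a * (q * x) = q * (a * x) by ring, show b * (q * x) = q * (b * x) by ring,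
    jTheta_mul hq hq0 (mul_ne_zero ha hx), jTheta_mul hq hq0 (mul_ne_zero hb hx)]
  field_simp

/-- A quasi-periodic function vanishing at `a⁻¹` vanishes at every zero of `x ↦ θ (a x)`. -/
lemma vanish_of_vanish {H e : ℂ → ℂ} {a : ℂ} (ha : a ≠ 0) (he : ∀ x, x ≠ 0 → e x ≠ 0)
    (eH : ∀ x, x ≠ 0 → H (q * x) = e x * H x) (h0 : H a⁻¹ = 0) {x : ℂ} (hx : x ≠ 0)
    (h : jTheta (a * x) q = 0) : H x = 0 := by
  obtain ⟨k, hk⟩ := jTheta_zero_imp hq hq0 (mul_ne_zero ha hx) h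
  have hxk : x = q ^ k * a⁻¹ := by rw [← hk]; field_simp
  rw [hxk]
  exact (zpow_invariant hq0 (P := fun w => H w = 0)
    (fun w hw => by rw [eH w hw]; simp [he w hw]) k (inv_ne_zero ha)).2 h0

/-- The three-term (Weierstrass) relation for theta functions. As functions of `a` the two sides
are proportional by `quasi_proportional`, and the constant is found by setting `a = c`. -/
lemma weierstrass {a b c d : ℂ} (ha : a ≠ 0) (hb : b ≠ 0) (hc : c ≠ 0) (hd : d ≠ 0)
    (hb2 : ∀ k : ℤ, b ^ 2 ≠ q ^ k) (hbc : ∀ k : ℤ, c * b ≠ q ^ k)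
    (hbc' : ∀ k : ℤ, c⁻¹ * b ≠ q ^ k) :
    jTheta (d * b) q * jTheta (d⁻¹ * b) q * (jTheta (c * a) q * jTheta (c⁻¹ * a) q) -
      jTheta (c * b) q * jTheta (c⁻¹ * b) q * (jTheta (d * a) q * jTheta (d⁻¹ * a) q) =
    b / c * (jTheta (d * c) q * jTheta (d⁻¹ * c) q) *
      (jTheta (b * a) q * jTheta (b⁻¹ * a) q) := by
  -- The multiplier of `W c` under `x ↦ q x` does not depend on `c`.
  set W : ℂ → ℂ → ℂ := fun c x => jTheta (c * x) q * jTheta (c⁻¹ * x) q with hW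
  have diffW : ∀ c, c ≠ 0 → DifferentiableOn ℂ (W c) {0}ᶜ := fun c hc =>
    (theta_mul_differentiableOn hq hc).fun_mul (theta_mul_differentiableOn hq (inv_ne_zero hc))
  have quasiW : ∀ c x, c ≠ 0 → x ≠ 0 → W c (q * x) = (x ^ 2)⁻¹ * W c x := by
    intro c x hc hx
    simpa [hW, hc] using two_theta_quasi hq hq0 hc (inv_ne_zero hc) hx
  have invW : ∀ c x, c ≠ 0 → x ≠ 0 → W c x⁻¹ = (x ^ 2)⁻¹ * W c x := by
    intro c x hc hx
    simp only [hW]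
    rw [show c * x⁻¹ = (c⁻¹ * x)⁻¹ by field_simp, show c⁻¹ * x⁻¹ = (c * x)⁻¹ by field_simp,
      jTheta_inv hq (mul_ne_zero hc hx), jTheta_inv hq (mul_ne_zero (inv_ne_zero hc) hx)]
    field_simp
  have selfW : ∀ c, c ≠ 0 → W c c = 0 := fun c hc => by simp [hW, hc, jTheta_one hq]
  have swapW : ∀ b c, b ≠ 0 → c ≠ 0 → W b c = -(c / b) * W c b := by
    intro b c hb hc
    simp only [hW]
    rw [show b⁻¹ * c = (c⁻¹ * b)⁻¹ by field_simp, jTheta_inv hq (mul_ne_zero (inv_ne_zero hc) hb),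
      mul_comm b c]
    field_simp
  have eN : ∀ x, x ≠ 0 → W d b * W c (q * x) - W c b * W d (q * x) =
      (x ^ 2)⁻¹ * (W d b * W c x - W c b * W d x) := fun x hx => by
    rw [quasiW c x hc hx, quasiW d x hd hx]; ring
  obtain ⟨K, hK, -⟩ := quasi_proportional hq hq0 (H := fun x => W d b * W c x - W c b * W d x)
    (J := W b) (c := fun _ => 1) (d := fun x => (x ^ 2)⁻¹)
    (((diffW c hc).const_mul _).fun_sub ((diffW d hd).const_mul _)) (diffW b hb)
    (fun x hx h => two_theta_simple hq hq0 hb (inv_ne_zero hb) (fun k hk => hb2 (-k) (by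
      rw [zpow_neg]
      refine eq_inv_of_mul_eq_one_left ?_
      linear_combination mul_inv_cancel₀ hb - b * hk)) hx h)
    (fun x hx h => by
      rcases mul_eq_zero.1 h with h | h
      · refine vanish_of_vanish hq hq0 (e := fun x => (x ^ 2)⁻¹)
          (H := fun x => W d b * W c x - W c b * W d x) hb (by simp) eN ?_ hx h
        simp only [invW _ _ hc hb, invW _ _ hd hb]
        ring
      · refine vanish_of_vanish hq hq0 (e := fun x => (x ^ 2)⁻¹)
          (H := fun x => W d b * W c x - W c b * W d x) (inv_ne_zero hb) (by simp) eN ?_ hx h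
        simp only [inv_inv]
        ring)
    continuous_const (by simp) (by simp) (by simp)
    (fun x hx => by rw [one_mul]; exact eN x hx) (fun x hx => quasiW b x hb hx)
  have hWcb : W c b ≠ 0 := mul_ne_zero (jTheta_ne_zero hq hq0 (mul_ne_zero hc hb) hbc)
    (jTheta_ne_zero hq hq0 (mul_ne_zero (inv_ne_zero hc) hb) hbc')
  have hKc := hK c hc
  simp only [selfW c hc, swapW b c hb hc] at hKc
  have hKv : K = b / c * W d c := by
    field_simp at hKc ⊢
    refine mul_right_cancel₀ hWcb ?_
    linear_combination hKc
  have := hK a ha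
  rw [hKv] at this
  exact this

end Theta

/-! ### Bilateral series -/

/-- The coefficient `(-1)^r q^{r(r-1)/2}` of the theta and Appell–Lerch series. -/
noncomputable def alCoef (q : ℂ) (r : ℤ) : ℂ := (-1 : ℂ) ^ r * q ^ (r * (r - 1) / 2)

/-- The numerator series of `mAL x q z`, that is, `mAL` without the factor `1 / j(z;q)`. -/
noncomputable def lerch (x q z : ℂ) : ℂ :=
  ∑' r : ℤ, alCoef q r * z ^ r / (1 - q ^ (r - 1) * x * z)

/-- The bilateral theta series `Σ_r (-1)^r q^{r(r-1)/2} z^r`. -/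
noncomputable def thetaSeries (q z : ℂ) : ℂ := ∑' r : ℤ, alCoef q r * z ^ r

lemma alCoef_succ {q : ℂ} (hq0 : q ≠ 0) (r : ℤ) : alCoef q (r + 1) = -q ^ r * alCoef q r := by
  unfold alCoef
  have h : (r + 1) * (r + 1 - 1) / 2 = r * (r - 1) / 2 + r := by
    rw [show (r + 1) * (r + 1 - 1) = r * (r - 1) + r * 2 by ring,
      Int.add_mul_ediv_right _ _ (by norm_num)]
  rw [h, zpow_add₀ hq0, zpow_add_one₀ (by norm_num)]
  ring

lemma alCoef_ne_zero {q : ℂ} (hq0 : q ≠ 0) (r : ℤ) : alCoef q r ≠ 0 :=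
  mul_ne_zero (zpow_ne_zero _ (by norm_num)) (zpow_ne_zero _ hq0)

lemma alCoef_one_sub (q : ℂ) (r : ℤ) : alCoef q (1 - r) = -alCoef q r := by
  unfold alCoef
  rw [show (1 - r) * (1 - r - 1) = r * (r - 1) by ring, zpow_sub₀ (by norm_num), zpow_one,
    div_eq_mul_inv, ← inv_zpow, inv_neg_one]
  ring

section Series

variable {q : ℂ} (hq : ‖q‖ < 1) (hq0 : q ≠ 0)
include hq hq0

lemma summable_alCoef {z : ℂ} (hz : z ≠ 0) : Summable fun r : ℤ => ‖alCoef q r * z ^ r‖ := by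
  have hne : ∀ r : ℤ, ‖alCoef q r * z ^ r‖ ≠ 0 := fun r =>
    norm_ne_zero_iff.2 (mul_ne_zero (alCoef_ne_zero hq0 r) (zpow_ne_zero _ hz))
  have hqt := tendsto_pow_atTop_nhds_zero_of_lt_one (norm_nonneg q) hq
  refine Summable.of_nat_of_neg ?_ ?_
  · refine summable_of_ratio_test_tendsto_lt_one (l := 0) one_pos (.of_forall fun n => hne n) ?_
    have : (fun n : ℕ => ‖q‖ ^ n * ‖z‖) = fun n : ℕ =>
        ‖‖alCoef q ((n + 1 : ℕ) : ℤ) * z ^ ((n + 1 : ℕ) : ℤ)‖‖ /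
          ‖‖alCoef q (n : ℤ) * z ^ (n : ℤ)‖‖ := by
      ext n
      rw [norm_norm, norm_norm, eq_div_iff (hne n), Nat.cast_succ, alCoef_succ hq0,
        zpow_add_one₀ hz]
      simp only [norm_mul, norm_neg, zpow_natCast, norm_pow]
      ring
    rw [← this]
    simpa using hqt.mul_const ‖z‖
  · refine summable_of_ratio_test_tendsto_lt_one (l := 0) one_pos
      (.of_forall fun n => hne (-n)) ?_
    have : (fun n : ℕ => ‖q‖ ^ (n + 1) * ‖z‖⁻¹) = fun n : ℕ =>
        ‖‖alCoef q (-((n + 1 : ℕ) : ℤ)) * z ^ (-((n + 1 : ℕ) : ℤ))‖‖ /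
          ‖‖alCoef q (-(n : ℤ)) * z ^ (-(n : ℤ))‖‖ := by
      ext n
      rw [norm_norm, norm_norm, eq_div_iff (hne _)]
      have e : -(n : ℤ) = -((n + 1 : ℕ) : ℤ) + 1 := by push_cast; ring
      rw [e, alCoef_succ hq0, zpow_add_one₀ hz]
      have hzn := norm_ne_zero_iff.2 hz
      have hqn := norm_ne_zero_iff.2 hq0
      simp only [norm_mul, norm_neg, zpow_neg, zpow_natCast, norm_pow, norm_inv]
      field_simp
    rw [← this]
    simpa using ((tendsto_add_atTop_iff_nat 1).2 hqt).mul_const ‖z‖⁻¹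

/-- Near `y₀`, all but finitely many of the denominators `1 - q^(r-1) y` are at least `1/2` in
norm: `q^(r-1) y` tends to `0` as `r → ∞` and to infinity as `r → -∞`. -/
lemma kernel_bound {y₀ : ℂ} (hy : y₀ ≠ 0) : ∃ N : ℕ, ∀ y ∈ Metric.closedBall y₀ (‖y₀‖ / 2),
    ∀ r : ℤ, r ∉ Icc (1 - N : ℤ) (1 + N) → 1 / 2 ≤ ‖1 - q ^ (r - 1) * y‖ := by
  have hyp := norm_pos_iff.2 hy
  have hqp := norm_pos_iff.2 hq0
  obtain ⟨N, hN⟩ := exists_pow_lt_of_lt_one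
    (show 0 < min (1 / (3 * ‖y₀‖)) (‖y₀‖ / 4) by positivity) hq
  obtain ⟨hN1, hN2⟩ := lt_min_iff.1 hN
  refine ⟨N, fun y hyK r hr => ?_⟩
  rw [mem_closedBall_iff_norm] at hyK
  have hl : ‖y₀‖ / 2 ≤ ‖y‖ := by
    have := norm_sub_norm_le y₀ y
    rw [norm_sub_rev] at this
    linarith
  have hu : ‖y‖ ≤ 3 / 2 * ‖y₀‖ := by
    have := norm_sub_norm_le y y₀
    linarith
  have hr : r < 1 - N ∨ 1 + N < r := by
    by_contra! h; exact hr ⟨h.1, h.2⟩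
  rcases hr with hr | hr
  · have h1 : (‖q‖ ^ N)⁻¹ ≤ ‖q‖ ^ (r - 1) := by
      rw [← zpow_natCast, ← zpow_neg]
      exact zpow_le_zpow_right_of_le_one₀ hqp hq.le (by omega)
    have h2 : 2 ≤ ‖q ^ (r - 1) * y‖ := by
      rw [norm_mul, norm_zpow]
      calc (2 : ℝ) = 4 / ‖y₀‖ * (‖y₀‖ / 2) := by field_simp; norm_num
        _ ≤ (‖q‖ ^ N)⁻¹ * (‖y₀‖ / 2) := by
          gcongr
          rw [le_inv_comm₀ (by positivity) (by positivity), inv_div]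
          exact hN2.le
        _ ≤ _ := by gcongr
    have := norm_sub_norm_le (q ^ (r - 1) * y) 1
    rw [norm_sub_rev, norm_one] at this
    linarith
  · have h1 : ‖q‖ ^ (r - 1) ≤ ‖q‖ ^ N := by
      rw [← zpow_natCast]
      exact zpow_le_zpow_right_of_le_one₀ hqp hq.le (by omega)
    have h2 : ‖q ^ (r - 1) * y‖ ≤ 1 / 2 := by
      rw [norm_mul, norm_zpow]
      calc ‖q‖ ^ (r - 1) * ‖y‖ ≤ 1 / (3 * ‖y₀‖) * (3 / 2 * ‖y₀‖) := by
            gcongr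
            exact h1.trans hN1.le
        _ = 1 / 2 := by field_simp
    have := norm_sub_norm_le 1 (q ^ (r - 1) * y)
    rw [norm_one] at this
    linarith

lemma summable_kernel {b : ℤ → ℂ} (hb : Summable fun r => ‖b r‖) {y : ℂ} (hy : y ≠ 0) :
    Summable fun r : ℤ => b r / (1 - q ^ (r - 1) * y) := by
  obtain ⟨N, hN⟩ := kernel_bound hq hq0 hy
  refine (hb.mul_right 2).of_norm_bounded_eventually ?_
  filter_upwards [(finite_Icc (1 - N : ℤ) (1 + N)).compl_mem_cofinite] with r hr
  have := hN y (Metric.mem_closedBall_self (by positivity)) r hr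
  rw [norm_div, div_le_iff₀ (by linarith)]
  nlinarith [norm_nonneg (b r)]

lemma kernel_ne_zero {y : ℂ} (h : jTheta y q ≠ 0) (k : ℤ) : 1 - q ^ k * y ≠ 0 := by
  intro h1
  have e : y = q ^ (-k) * 1 := by
    rw [zpow_neg, mul_one]
    exact eq_inv_of_mul_eq_one_right (by linear_combination -h1)
  rw [e, Ne, jTheta_zpow_mul hq hq0 _ one_ne_zero] at h
  exact h (jTheta_one hq)

/-- Multiplying `Σ_r b_r / (1 - q^{r-1} y)` by `θ(y)` removes its poles; at `y = 1` only the
term with `r = 1` survives. -/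
lemma lerch_ext {b : ℤ → ℂ} (hb : Summable fun r => ‖b r‖) :
    ∃ A : ℂ → ℂ, DifferentiableOn ℂ A {0}ᶜ ∧
      (∀ y, y ≠ 0 → jTheta y q ≠ 0 → A y = jTheta y q * ∑' r : ℤ, b r / (1 - q ^ (r - 1) * y)) ∧
      A 1 = b 1 * -deriv (fun z => jTheta z q) 1 := by
  -- Divide `θ(y)` by each denominator separately, then sum.
  have hg : ∀ r : ℤ, ∃ g : ℂ → ℂ, DifferentiableOn ℂ g {0}ᶜ ∧
      ∀ y, y ≠ 0 → jTheta y q = g y * (1 - q ^ (r - 1) * y) := by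
    intro r
    refine exists_quotient (jTheta_differentiableOn hq) (by fun_prop) ?_ ?_
    · intro x _ _
      have : HasDerivAt (fun y => 1 - q ^ (r - 1) * y) (-(q ^ (r - 1) * 1)) x :=
        ((hasDerivAt_id x).const_mul _).const_sub 1
      rw [this.deriv]
      simpa using zpow_ne_zero _ hq0
    · intro x _ h
      by_contra h1
      exact kernel_ne_zero hq hq0 h1 _ h
  choose g hgd hge using hg
  refine ⟨fun y => ∑' r : ℤ, b r * g r y, ?_, ?_, ?_⟩
  · intro y₀ hy₀
    have hy0 : y₀ ≠ 0 := by simpa using hy₀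
    have hyp := norm_pos_iff.2 hy0
    obtain ⟨N, hN⟩ := kernel_bound hq hq0 hy0
    have hK : IsCompact (Metric.closedBall y₀ (‖y₀‖ / 2)) := isCompact_closedBall _ _
    have hsub : Metric.closedBall y₀ (‖y₀‖ / 2) ⊆ {0}ᶜ := by
      intro y hy h
      rw [mem_singleton_iff] at h
      rw [h, mem_closedBall_iff_norm, zero_sub, norm_neg] at hy
      linarith
    have hmem : y₀ ∈ Metric.closedBall y₀ (‖y₀‖ / 2) :=
      Metric.mem_closedBall_self (by positivity)
    obtain ⟨C, hC⟩ := hK.exists_bound_of_continuousOn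
      ((jTheta_differentiableOn hq).continuousOn.mono hsub)
    have hM : ∀ r : ℤ, ∃ M, (∀ y ∈ Metric.closedBall y₀ (‖y₀‖ / 2), ‖g r y‖ ≤ M) ∧
        (r ∉ Icc (1 - N : ℤ) (1 + N) → M ≤ 2 * C) := by
      intro r
      by_cases hr : r ∈ Icc (1 - N : ℤ) (1 + N)
      · obtain ⟨M, hM⟩ := hK.exists_bound_of_continuousOn ((hgd r).continuousOn.mono hsub)
        exact ⟨M, hM, fun h => absurd hr h⟩
      · refine ⟨2 * C, fun y hy => ?_, fun _ => le_rfl⟩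
        have h1 := hC y hy
        have h2 := hN y hy r hr
        rw [hge r y (hsub hy), norm_mul] at h1
        nlinarith [norm_nonneg (g r y)]
    choose M hM1 hM2 using hM
    have hM0 : ∀ r, 0 ≤ M r := fun r => (norm_nonneg _).trans (hM1 r y₀ hmem)
    have hu : Summable fun r => ‖b r‖ * M r := by
      refine (hb.mul_right (2 * C)).of_norm_bounded_eventually ?_
      filter_upwards [(finite_Icc (1 - N : ℤ) (1 + N)).compl_mem_cofinite] with r hr
      rw [Real.norm_of_nonneg (mul_nonneg (norm_nonneg _) (hM0 r))]
      exact mul_le_mul_of_nonneg_left (hM2 r hr) (norm_nonneg _)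
    have := Complex.differentiableOn_tsum_of_summable_norm (F := fun r y => b r * g r y)
      (U := Metric.ball y₀ (‖y₀‖ / 2)) hu
      (fun r => ((hgd r).mono (Metric.ball_subset_closedBall.trans hsub)).const_mul _)
      Metric.isOpen_ball (fun r y hy => by
        rw [norm_mul]
        exact mul_le_mul_of_nonneg_left (hM1 r y (Metric.ball_subset_closedBall hy))
          (norm_nonneg _))
    exact (this.differentiableAt (Metric.ball_mem_nhds _ (by positivity))).differentiableWithinAt
  · intro y hy hty
    simp only
    rw [← tsum_mul_left]
    refine tsum_congr fun r => ?_
    have h := kernel_ne_zero hq hq0 hty (r - 1)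
    rw [hge r y hy]
    field_simp
  · simp only
    rw [tsum_eq_single 1]
    · congr 1
      have hn : ({0}ᶜ : Set ℂ) ∈ 𝓝 1 := isOpen_compl_singleton.mem_nhds (by simp)
      have e : (fun z => jTheta z q) =ᶠ[𝓝 1] fun y => g 1 y * (1 - y) := by
        filter_upwards [hn] with y hy
        simpa using hge 1 y (by simpa using hy)
      have d := (((hgd 1).differentiableAt hn).hasDerivAt.fun_mul
        ((hasDerivAt_id (1 : ℂ)).const_sub 1)).congr_of_eventuallyEq e
      rw [d.deriv]
      simp
    · intro r hr
      have h := hge r 1 one_ne_zero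
      rw [jTheta_one hq, mul_one] at h
      have h1 : 1 - q ^ (r - 1) ≠ 0 := by
        intro h1
        have : ‖q‖ ^ (r - 1) = 1 := by rw [← norm_zpow, ← sub_eq_zero.1 h1, norm_one]
        rw [zpow_eq_one_iff_right₀ (norm_nonneg q) hq.ne] at this
        omega
      rcases mul_eq_zero.1 h.symm with h | h
      · rw [h, mul_zero]
      · exact absurd h h1

/-- The functional equation of the Appell–Lerch series in `x`, obtained by shifting `r` by one. -/
lemma lerch_shift {x z : ℂ} (hx : x ≠ 0) (hz : z ≠ 0) (h : jTheta (x * z) q ≠ 0) :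
    lerch (q * x) q z = thetaSeries q z - x * lerch x q z := by
  have hb := summable_alCoef hq hq0 hz
  have hxz := mul_ne_zero hx hz
  have hs2 : Summable fun r : ℤ => alCoef q r * z ^ r / (1 - q ^ (r - 1) * (q * x * z)) :=
    summable_kernel hq hq0 hb (mul_ne_zero (mul_ne_zero hq0 hx) hz)
  have e2 : x * lerch x q z = ∑' r : ℤ, (alCoef q r * z ^ r -
      alCoef q r * z ^ r / (1 - q ^ (r - 1) * (q * x * z))) := by
    unfold lerch
    rw [← tsum_mul_left, ← (Equiv.addRight (1 : ℤ)).tsum_eq]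
    refine tsum_congr fun r => ?_
    have hk := kernel_ne_zero hq hq0 h r
    have hqr : q ^ (r - 1) * (q * x * z) = q ^ r * (x * z) := by
      rw [zpow_sub_one₀ hq0]; field_simp
    rw [hqr, Equiv.coe_addRight, alCoef_succ hq0, zpow_add_one₀ hz, add_sub_cancel_right,
      mul_assoc (q ^ r) x z]
    rw [eq_sub_iff_add_eq, mul_div_assoc', ← add_div, div_eq_iff hk]
    ring
  rw [e2, hb.of_norm.tsum_sub hs2, lerch, thetaSeries]
  simp only [← mul_assoc]
  ring

/-- The theta series is a constant multiple of the theta product. By Jacobi's triple product the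
constant is `1`; its value plays no role below. -/
lemma thetaSeries_eq : ∃ K : ℂ, ∀ z, z ≠ 0 → thetaSeries q z = K * jTheta z q := by
  have eS : ∀ z, z ≠ 0 → thetaSeries q (q * z) = -z⁻¹ * thetaSeries q z := by
    intro z hz
    unfold thetaSeries
    rw [← tsum_mul_left, ← (Equiv.addRight (1 : ℤ)).tsum_eq (fun r => -z⁻¹ * (alCoef q r * z ^ r))]
    refine tsum_congr fun r => ?_
    rw [Equiv.coe_addRight, alCoef_succ hq0, zpow_add_one₀ hz, mul_zpow]
    field_simp
  have hS1 : thetaSeries q 1 = 0 := by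
    -- The involution `r ↦ 1 - r` changes the sign of every term.
    have : thetaSeries q 1 = -thetaSeries q 1 := by
      conv_lhs => rw [thetaSeries, ← (Equiv.subLeft (1 : ℤ)).tsum_eq]
      rw [thetaSeries, ← tsum_neg]
      refine tsum_congr fun r => ?_
      simp [alCoef_one_sub]
    linear_combination this / 2
  have hd : DifferentiableOn ℂ (thetaSeries q) {0}ᶜ := by
    intro y₀ hy₀
    have hyp : 0 < ‖y₀‖ := norm_pos_iff.2 (by simpa using hy₀)
    have hl : ∀ y ∈ Metric.ball y₀ (‖y₀‖ / 2), ‖y₀‖ / 2 ≤ ‖y‖ ∧ ‖y‖ ≤ 2 * ‖y₀‖ := by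
      intro y hy
      rw [mem_ball_iff_norm] at hy
      have h1 := norm_sub_norm_le y₀ y
      have h2 := norm_sub_norm_le y y₀
      rw [norm_sub_rev] at h1
      constructor <;> linarith
    have hl0 : ∀ y ∈ Metric.ball y₀ (‖y₀‖ / 2), y ≠ 0 := fun y hy =>
      norm_pos_iff.1 (lt_of_lt_of_le (by positivity) (hl y hy).1)
    have h1 := summable_alCoef hq hq0
      (z := ((‖y₀‖ / 2 : ℝ) : ℂ)) (by exact_mod_cast (by positivity : ‖y₀‖ / 2 ≠ 0))
    have h2 := summable_alCoef hq hq0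
      (z := ((2 * ‖y₀‖ : ℝ) : ℂ)) (by exact_mod_cast (by positivity : 2 * ‖y₀‖ ≠ 0))
    have := Complex.differentiableOn_tsum_of_summable_norm (F := fun r y => alCoef q r * y ^ r)
      (U := Metric.ball y₀ (‖y₀‖ / 2)) (h1.add h2)
      (fun r => (DifferentiableOn.zpow differentiableOn_id
        (Or.inl fun y hy => hl0 y hy)).const_mul _)
      Metric.isOpen_ball (fun r y hy => by
        obtain ⟨ha, hb⟩ := hl y hy
        have hyn := norm_pos_iff.2 (hl0 y hy)
        simp only [norm_mul, norm_zpow, ← mul_add]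
        refine mul_le_mul_of_nonneg_left ?_ (norm_nonneg _)
        rw [Complex.norm_of_nonneg (by positivity), Complex.norm_of_nonneg (by positivity)]
        rcases le_total 0 r with hr | hr
        · have := zpow_le_zpow_left₀ hr hyn.le hb
          have : 0 < (‖y₀‖ / 2) ^ r := by positivity
          linarith
        · have := zpow_le_zpow_left₀ (neg_nonneg.2 hr) (by positivity) ha
          rw [zpow_neg, zpow_neg, inv_le_inv₀ (by positivity) (by positivity)] at this
          have : 0 < (2 * ‖y₀‖) ^ r := by positivity
          linarith)
    exact (this.differentiableAt (Metric.ball_mem_nhds _ (by positivity))).differentiableWithinAt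
  obtain ⟨K, hK, -⟩ := quasi_proportional hq hq0 (H := thetaSeries q) (J := fun z => jTheta z q)
    (c := fun _ => 1) (d := fun x => -x⁻¹) hd (jTheta_differentiableOn hq)
    (fun x hx h => jTheta_simple hq hq0 hx h)
    (fun x hx h => vanish_of_vanish hq hq0 (a := 1) (e := fun x => -x⁻¹) one_ne_zero
      (by simp) eS (by simpa using hS1) hx (by simpa using h))
    continuous_const (by simp) (by simp) (by simp)
    (fun x hx => by rw [one_mul]; exact eS x hx) (fun x hx => jTheta_mul hq hq0 hx)
  exact ⟨K, hK⟩

/-- The theta series coming from `lerch_shift` cancel in this combination. -/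
lemma lerch_cross_shift {z₀ z₁ x : ℂ} (h0 : z₀ ≠ 0) (h1 : z₁ ≠ 0) (hx : x ≠ 0)
    (hx0 : jTheta (x * z₀) q ≠ 0) (hx1 : jTheta (x * z₁) q ≠ 0) :
    jTheta z₀ q * lerch (q * x) q z₁ - jTheta z₁ q * lerch (q * x) q z₀ =
      -x * (jTheta z₀ q * lerch x q z₁ - jTheta z₁ q * lerch x q z₀) := by
  obtain ⟨K, hK⟩ := thetaSeries_eq hq hq0
  rw [lerch_shift hq hq0 hx h0 hx0, lerch_shift hq hq0 hx h1 hx1, hK _ h0, hK _ h1]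
  ring

/-- The dependence of the Appell–Lerch series on its last argument is a theta quotient. After
multiplying by `J x = θ(z₀ x) θ(z₁ x)`, the difference `F` of the two sides is holomorphic on the
punctured plane and vanishes at `z₀⁻¹` and `z₁⁻¹`, hence at all zeros of `J`. Both sides of the
identity are multiplied by `-x` when `x` is replaced by `q x`, so `F / J` is too; a holomorphic
function on the punctured plane with this property vanishes. -/
lemma lerch_diff {z₀ z₁ x : ℂ} (h0 : z₀ ≠ 0) (h1 : z₁ ≠ 0) (hx : x ≠ 0)
    (h01 : ∀ k : ℤ, z₁ ≠ q ^ k * z₀)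
    (hx0 : jTheta (x * z₀) q ≠ 0) (hx1 : jTheta (x * z₁) q ≠ 0) :
    jTheta z₀ q * lerch x q z₁ - jTheta z₁ q * lerch x q z₀ =
      z₀ * -deriv (fun z => jTheta z q) 1 * jTheta (z₁ / z₀) q * jTheta (x * z₀ * z₁) q /
        (jTheta (x * z₀) q * jTheta (x * z₁) q) := by
  obtain ⟨A₀, dA₀, eA₀, vA₀⟩ := lerch_ext hq hq0 (summable_alCoef hq hq0 h0)
  obtain ⟨A₁, dA₁, eA₁, vA₁⟩ := lerch_ext hq hq0 (summable_alCoef hq hq0 h1)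
  set κ : ℂ := -deriv (fun z => jTheta z q) 1 with hκ
  have a1 : alCoef q 1 = -1 := by simp [alCoef]
  rw [a1, zpow_one] at vA₀ vA₁
  have h01' := mul_ne_zero h0 h1
  have hl : ∀ (w y : ℂ), lerch y q w = ∑' r : ℤ, alCoef q r * w ^ r / (1 - q ^ (r - 1) * (w * y)) :=
    fun w y => by
      unfold lerch
      exact tsum_congr fun r => by ring_nf
  set D : ℂ → ℂ := fun x => jTheta z₀ q * lerch x q z₁ - jTheta z₁ q * lerch x q z₀ with hD
  set J : ℂ → ℂ := fun x => jTheta (z₀ * x) q * jTheta (z₁ * x) q with hJ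
  set F : ℂ → ℂ := fun x => jTheta z₀ q * jTheta (z₀ * x) q * A₁ (z₁ * x) -
    jTheta z₁ q * jTheta (z₁ * x) q * A₀ (z₀ * x) -
    z₀ * κ * jTheta (z₁ / z₀) q * jTheta (z₀ * z₁ * x) q with hF
  have dJ : DifferentiableOn ℂ J {0}ᶜ :=
    (theta_mul_differentiableOn hq h0).mul (theta_mul_differentiableOn hq h1)
  have sJ : ∀ x, x ≠ 0 → J x = 0 → deriv J x ≠ 0 := fun x hx h =>
    two_theta_simple hq hq0 h0 h1 h01 hx h
  have dcomp : ∀ {A : ℂ → ℂ} {a : ℂ}, DifferentiableOn ℂ A {0}ᶜ → a ≠ 0 →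
      DifferentiableOn ℂ (fun x => A (a * x)) {0}ᶜ := fun {A a} hA ha =>
    hA.comp (f := fun x => a * x) (by fun_prop) fun x hx => by simpa [ha] using hx
  have dF : DifferentiableOn ℂ F {0}ᶜ :=
    ((((theta_mul_differentiableOn hq h0).const_mul _).mul (dcomp dA₁ h1)).sub
      (((theta_mul_differentiableOn hq h1).const_mul _).mul (dcomp dA₀ h0))).sub
      ((theta_mul_differentiableOn hq h01').const_mul _)
  have eF : ∀ x, x ≠ 0 → J x ≠ 0 →
      F x = J x * D x - z₀ * κ * jTheta (z₁ / z₀) q * jTheta (z₀ * z₁ * x) q := by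
    intro x hx h
    obtain ⟨t0, t1⟩ := mul_ne_zero_iff.1 h
    simp only [hF, hD, hJ]
    rw [eA₀ _ (mul_ne_zero h0 hx) t0, eA₁ _ (mul_ne_zero h1 hx) t1, ← hl, ← hl]
    ring
  have qJ : ∀ x, x ≠ 0 → J (q * x) = (z₀ * z₁ * x ^ 2)⁻¹ * J x := fun x hx =>
    two_theta_quasi hq hq0 h0 h1 hx
  have qF : ∀ x, x ≠ 0 → F (q * x) = -(z₀ * z₁ * x)⁻¹ * F x := by
    intro x hx
    refine eq_of_eq_off_zeros (F := fun x => F (q * x)) (G := fun x => -(z₀ * z₁ * x)⁻¹ * F x)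
      (dcomp dF hq0).continuousOn ?_ dJ sJ ?_ hx
    · refine ContinuousOn.mul (ContinuousOn.neg (ContinuousOn.inv₀ (by fun_prop) ?_))
        dF.continuousOn
      intro y hy
      exact mul_ne_zero h01' hy
    · intro x hx h
      have hJq : J (q * x) ≠ 0 := by
        rw [qJ x hx]
        exact mul_ne_zero (inv_ne_zero (mul_ne_zero h01' (pow_ne_zero 2 hx))) h
      obtain ⟨t0, t1⟩ := mul_ne_zero_iff.1 h
      have hDq : D (q * x) = -x * D x :=
        lerch_cross_shift hq hq0 h0 h1 hx (by rwa [mul_comm]) (by rwa [mul_comm])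
      rw [eF _ (mul_ne_zero hq0 hx) hJq, eF _ hx h, qJ x hx, hDq,
        show z₀ * z₁ * (q * x) = q * (z₀ * z₁ * x) by ring,
        jTheta_mul hq hq0 (mul_ne_zero h01' hx)]
      field_simp
      ring
  have e10 : jTheta (z₀ / z₁) q = -(z₀ / z₁) * jTheta (z₁ / z₀) q := by
    have := jTheta_inv hq (div_ne_zero h1 h0)
    rwa [inv_div] at this
  have F0 : F z₀⁻¹ = 0 := by
    simp only [hF]
    rw [mul_inv_cancel₀ h0, jTheta_one hq, vA₀, ← div_eq_mul_inv, ← div_eq_mul_inv, mul_div_right_comm,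
      div_self h0, one_mul]
    ring
  have F1 : F z₁⁻¹ = 0 := by
    simp only [hF]
    rw [mul_inv_cancel₀ h1, jTheta_one hq, vA₁, ← div_eq_mul_inv, e10,
      mul_inv_cancel_right₀ h1]
    field_simp
    ring
  have hne : ∀ x, x ≠ 0 → -(z₀ * z₁ * x)⁻¹ ≠ 0 := fun x hx =>
    neg_ne_zero.2 (inv_ne_zero (mul_ne_zero h01' hx))
  have F00 : ∀ x, x ≠ 0 → J x = 0 → F x = 0 := by
    intro x hx h
    rcases mul_eq_zero.1 h with h | h
    · exact vanish_of_vanish hq hq0 h0 hne qF F0 hx h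
    · exact vanish_of_vanish hq hq0 h1 hne qF F1 hx h
  obtain ⟨K, hK, hK1⟩ := quasi_proportional hq hq0 (H := F) (J := J) (c := fun x => -x)
    (d := fun x => (z₀ * z₁ * x ^ 2)⁻¹) dF dJ sJ F00 continuous_neg (by simp) (by simp)
    (fun x hx => inv_ne_zero (mul_ne_zero h01' (pow_ne_zero 2 hx)))
    (fun x hx => by
      rw [qF x hx]
      field_simp)
    qJ
  have K0 : K = 0 := by
    have := hK1 1 one_ne_zero
    linear_combination this / 2
  have hJx : J x ≠ 0 := mul_ne_zero (by rwa [mul_comm]) (by rwa [mul_comm])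
  have := hK x hx
  rw [K0, zero_mul, eF x hx hJx] at this
  rw [eq_div_iff (mul_ne_zero hx0 hx1), mul_comm x z₀, mul_comm x z₁,
    show z₀ * x * z₁ = z₀ * z₁ * x by ring]
  linear_combination this

/-- The change of the last argument of `m(x,q,z)`: the difference is an explicit theta quotient. -/
lemma mAL_diff {z₀ z₁ x : ℂ} (h0 : z₀ ≠ 0) (h1 : z₁ ≠ 0) (hx : x ≠ 0)
    (h01 : ∀ k : ℤ, z₁ ≠ q ^ k * z₀) (t0 : jTheta z₀ q ≠ 0) (t1 : jTheta z₁ q ≠ 0)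
    (hx0 : jTheta (x * z₀) q ≠ 0) (hx1 : jTheta (x * z₁) q ≠ 0) :
    mAL x q z₁ - mAL x q z₀ =
      z₀ * -deriv (fun z => jTheta z q) 1 * jTheta (z₁ / z₀) q * jTheta (x * z₀ * z₁) q /
        (jTheta z₀ q * jTheta z₁ q * jTheta (x * z₀) q * jTheta (x * z₁) q) := by
  have h := lerch_diff hq hq0 h0 h1 hx h01 hx0 hx1
  rw [show mAL x q z₁ = (jTheta z₁ q)⁻¹ * lerch x q z₁ from rfl,
    show mAL x q z₀ = (jTheta z₀ q)⁻¹ * lerch x q z₀ from rfl]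
  rw [mul_assoc (_ * _) (jTheta (x * z₀) q), mul_comm (_ * _) (_ * _), ← div_div, ← h]
  field_simp

end Series

/-! ### The theta functions of nome `q ^ 3` -/

section Cubic

variable {q z : ℂ} (hq : ‖q‖ < 1) (hq0 : q ≠ 0)
include hq hq0

lemma cubic_theta_ne_zero {w : ℂ} (hw : w ≠ 0) (h : ∀ k : ℤ, w ≠ q ^ k) (n : ℤ) :
    jTheta (q ^ n * w) (q ^ 3) ≠ 0 := by
  refine jTheta_ne_zero (by rw [norm_pow]; exact pow_lt_one₀ (norm_nonneg q) hq (by norm_num))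
    (pow_ne_zero 3 hq0) (mul_ne_zero (zpow_ne_zero _ hq0) hw) fun k hk => h (3 * k - n) ?_
  rw [zpow_sub₀ hq0, eq_div_iff (zpow_ne_zero _ hq0), mul_comm, hk, zpow_mul]
  norm_cast

lemma not_cubic_zpow {m : ℤ} (hm : ¬ (3 : ℤ) ∣ m) (k : ℤ) : q ^ m ≠ (q ^ 3) ^ k := by
  intro h
  have e : (q ^ 3) ^ k = q ^ (3 * k) := by rw [zpow_mul]; norm_cast
  rw [e] at h
  have := congrArg norm h
  rw [norm_zpow, norm_zpow] at this
  have := zpow_right_injective₀ (norm_pos_iff.2 hq0) hq.ne this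
  exact hm ⟨k, this⟩

/-- The instance of the Weierstrass three-term relation behind the identity. -/
lemma cubic_relation (hz : z ≠ 0) (h1 : ∀ k : ℤ, z ≠ q ^ k) :
    jTheta (z ^ 2) (q ^ 3) * jTheta (q * z) (q ^ 3) * jTheta (q / z) (q ^ 3) =
      jTheta z (q ^ 3) * (z * jTheta (q / z ^ 2) (q ^ 3) * jTheta (q / z) (q ^ 3) +
        jTheta (q * z ^ 2) (q ^ 3) * jTheta (q * z) (q ^ 3)) := by
  have hQ : ‖q ^ 3‖ < 1 := by rw [norm_pow]; exact pow_lt_one₀ (norm_nonneg q) hq (by norm_num)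
  have hQ0 : q ^ 3 ≠ 0 := pow_ne_zero 3 hq0
  have hQk : ∀ k : ℤ, (q ^ 3) ^ k = q ^ (3 * k) := fun k => by rw [zpow_mul]; norm_cast
  have tq : jTheta q (q ^ 3) ≠ 0 := jTheta_ne_zero hQ hQ0 hq0 fun k => by
    simpa using not_cubic_zpow hq hq0 (m := 1) (by norm_num) k
  -- With `θ(w) = j(w;q³)` and this choice of `a, b, c, d`, the relation `θ(q³/w) = θ(w)` turns all
  -- twelve theta values into the required ones, up to the common factor `θ(q)`.
  have W := weierstrass hQ hQ0 (a := q ^ 2 / z) (b := q) (c := q / z) (d := z)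
    (by simp [hq0, hz]) hq0 (by simp [hq0, hz]) hz
    (fun k => by simpa using not_cubic_zpow hq hq0 (m := 2) (by norm_num) k)
    (fun k h => h1 (2 - 3 * k) (by
      rw [hQk] at h
      rw [zpow_sub₀ hq0, ← h]
      norm_cast
      field_simp))
    (fun k h => h1 (3 * k) (by
      rw [hQk] at h
      rw [← h]
      field_simp))
  rw [show z * q = q * z by ring, show z⁻¹ * q = q / z by field_simp,
    show q / z * (q ^ 2 / z) = q ^ 3 / z ^ 2 by field_simp,
    show (q / z)⁻¹ * (q ^ 2 / z) = q by field_simp,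
    show q / z * q = q ^ 3 / (q * z) by field_simp,
    show (q / z)⁻¹ * q = z by field_simp,
    show z * (q ^ 2 / z) = q ^ 3 / q by field_simp,
    show z⁻¹ * (q ^ 2 / z) = q ^ 3 / (q * z ^ 2) by field_simp,
    show q / (q / z) = z by field_simp,
    show z * (q / z) = q by field_simp,
    show z⁻¹ * (q / z) = q / z ^ 2 by field_simp,
    show q * (q ^ 2 / z) = q ^ 3 / z by field_simp,
    show q⁻¹ * (q ^ 2 / z) = q / z by field_simp,
    jTheta_div hQ0, jTheta_div hQ0, jTheta_div hQ0, jTheta_div hQ0, jTheta_div hQ0] at W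
  refine mul_right_cancel₀ tq ?_
  linear_combination W

/-- The identity with the terms paired so that only differences `m(x,q,z₁) - m(x,q,z₀)` occur. -/
lemma mAL_diff_identity (hz : z ≠ 0) (h1 : ∀ k : ℤ, z ≠ q ^ k) (h2 : ∀ k : ℤ, z ^ 2 ≠ q ^ k) :
    z * jTheta z q * (mAL q (q ^ 3) z - mAL q (q ^ 3) z⁻¹) =
      jTheta (z ^ 2) q *
        (z * (mAL (z ^ 3 * q) (q ^ 3) (z ^ 2)⁻¹ - mAL (z ^ 3 * q) (q ^ 3) z⁻¹) -
          (mAL ((z ^ 3)⁻¹ * q) (q ^ 3) (z ^ 2) - mAL ((z ^ 3)⁻¹ * q) (q ^ 3) z)) := by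
  have hQ : ‖q ^ 3‖ < 1 := by rw [norm_pow]; exact pow_lt_one₀ (norm_nonneg q) hq (by norm_num)
  have hQ0 : q ^ 3 ≠ 0 := pow_ne_zero 3 hq0
  have hQk : ∀ k : ℤ, (q ^ 3) ^ k = q ^ (3 * k) := fun k => by rw [zpow_mul]; norm_cast
  have hz2 : z ^ 2 ≠ 0 := pow_ne_zero 2 hz
  have hinv : ∀ {w : ℂ}, (∀ k : ℤ, w ≠ q ^ k) → ∀ k : ℤ, w⁻¹ ≠ q ^ k := fun {w} h k hk =>
    h (-k) (by rw [zpow_neg, ← hk, inv_inv])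
  have t1 : jTheta z (q ^ 3) ≠ 0 := by simpa using cubic_theta_ne_zero hq hq0 hz h1 0
  have t2 : jTheta (z ^ 2) (q ^ 3) ≠ 0 := by simpa using cubic_theta_ne_zero hq hq0 hz2 h2 0
  have t3 : jTheta (q * z) (q ^ 3) ≠ 0 := by simpa using cubic_theta_ne_zero hq hq0 hz h1 1
  have t4 : jTheta (q * z ^ 2) (q ^ 3) ≠ 0 := by simpa using cubic_theta_ne_zero hq hq0 hz2 h2 1
  have t5 : jTheta (q / z) (q ^ 3) ≠ 0 := by
    simpa [div_eq_mul_inv] using cubic_theta_ne_zero hq hq0 (inv_ne_zero hz) (hinv h1) 1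
  have t6 : jTheta (q / z ^ 2) (q ^ 3) ≠ 0 := by
    simpa [div_eq_mul_inv] using cubic_theta_ne_zero hq hq0 (inv_ne_zero hz2) (hinv h2) 1
  have i1 : jTheta z⁻¹ (q ^ 3) = -z⁻¹ * jTheta z (q ^ 3) := jTheta_inv hQ hz
  have i2 : jTheta (z ^ 2)⁻¹ (q ^ 3) = -(z ^ 2)⁻¹ * jTheta (z ^ 2) (q ^ 3) := jTheta_inv hQ hz2
  have t1' : jTheta z⁻¹ (q ^ 3) ≠ 0 := by
    rw [i1]; exact mul_ne_zero (neg_ne_zero.2 (inv_ne_zero hz)) t1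
  have t2' : jTheta (z ^ 2)⁻¹ (q ^ 3) ≠ 0 := by
    rw [i2]; exact mul_ne_zero (neg_ne_zero.2 (inv_ne_zero hz2)) t2
  have a1 : q * z⁻¹ = q / z := by field_simp
  have a2 : z ^ 3 * q * z⁻¹ = q * z ^ 2 := by field_simp
  have a3 : z ^ 3 * q * (z ^ 2)⁻¹ = q * z := by field_simp
  have a4 : (z ^ 3)⁻¹ * q * z = q / z ^ 2 := by field_simp
  have a5 : (z ^ 3)⁻¹ * q * z ^ 2 = q / z := by field_simp
  have D1 := mAL_diff hQ hQ0 (z₀ := z⁻¹) (z₁ := z) (x := q) (inv_ne_zero hz) hz hq0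
    (fun k h => h2 (3 * k) (by
      rw [hQk] at h
      rw [pow_two]
      nth_rw 1 [h]
      field_simp)) t1' t1 (by rwa [a1]) t3
  have D2 := mAL_diff hQ hQ0 (z₀ := z⁻¹) (z₁ := (z ^ 2)⁻¹) (x := z ^ 3 * q) (inv_ne_zero hz)
    (inv_ne_zero hz2) (by simp [hz, hq0])
    (fun k h => hinv h1 (3 * k) (by
      rw [hQk] at h
      refine mul_right_cancel₀ (inv_ne_zero hz) ?_
      rw [← h]
      field_simp)) t1' t2' (by rwa [a2]) (by rwa [a3])
  have D3 := mAL_diff hQ hQ0 (z₀ := z) (z₁ := z ^ 2) (x := (z ^ 3)⁻¹ * q) hz hz2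
    (by simp [hz, hq0])
    (fun k h => h1 (3 * k) (by
      rw [hQk] at h
      refine mul_right_cancel₀ hz ?_
      rw [← h, pow_two])) t1 t2 (by rwa [a4]) (by rwa [a5])
  rw [a1, show q / z * z = q by field_simp, show z / z⁻¹ = z ^ 2 by field_simp, i1] at D1
  rw [a2, a3, show q * z ^ 2 * (z ^ 2)⁻¹ = q by field_simp,
    show (z ^ 2)⁻¹ / z⁻¹ = z⁻¹ by field_simp, i1, i2] at D2
  rw [a4, a5, show q / z ^ 2 * z ^ 2 = q by field_simp,
    show z ^ 2 / z = z by field_simp] at D3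
  have P0 : qPochInf (q ^ 3) (q ^ 3) ^ 3 ≠ 0 := pow_ne_zero 3 (qPochInf_self_ne_zero hQ)
  have S1 := jTheta_split hq hq0 (z := z)
  have S2 := jTheta_split hq hq0 (z := z ^ 2)
  rw [← eq_div_iff P0] at S1 S2
  have R := cubic_relation hq hq0 hz h1
  -- Both sides are now rational in the theta values, with `z` and the derivative as parameters.
  rw [D1, D2, D3, S1, S2]
  clear D1 D2 D3 S1 S2 i1 i2 t1' t2'
  generalize deriv (fun z => jTheta z (q ^ 3)) 1 = κ
  generalize jTheta z (q ^ 3) = T1 at *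
  generalize jTheta (z ^ 2) (q ^ 3) = T2 at *
  generalize jTheta (q * z) (q ^ 3) = T3 at *
  generalize jTheta (q * z ^ 2) (q ^ 3) = T4 at *
  generalize jTheta (q / z) (q ^ 3) = T5 at *
  generalize jTheta (q / z ^ 2) (q ^ 3) = T6 at *
  generalize jTheta q (q ^ 3) = T at *
  generalize qPochInf q q = P at *
  generalize qPochInf (q ^ 3) (q ^ 3) ^ 3 = P3 at *
  clear a1 a2 a3 a4 a5 h1 h2 hQ0 hQ hQk hinv
  field_simp
  linear_combination P * κ * T * R

end Cubic

theorem jTheta_mAL_identity (q z : ℂ) (hq : ‖q‖ < 1) (hq0 : q ≠ 0) (hz : z ≠ 0)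
    (hzq : ∀ k : ℤ, z ≠ q ^ k ∧ z ^ 2 ≠ q ^ k ∧ z ^ 3 ≠ q ^ k) :
    z * jTheta (z⁻¹ * q) q * mAL q (q ^ 3) z +
      z * jTheta (z ^ (-2 : ℤ) * q) q * mAL (z ^ 3 * q) (q ^ 3) z⁻¹ +
      z ^ 2 * jTheta (z * q) q * mAL q (q ^ 3) z⁻¹ +
      z ^ 2 * jTheta (z ^ 2 * q) q * mAL (z ^ (-3 : ℤ) * q) (q ^ 3) z =
    -(jTheta (z ^ 2) q * mAL (z ^ (-3 : ℤ) * q) (q ^ 3) (z ^ 2)) +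
      z * jTheta (z ^ 2) q * mAL (z ^ 3 * q) (q ^ 3) (z ^ (-2 : ℤ)) := by

  have h1 : ∀ k : ℤ, z ≠ q ^ k := fun k => (hzq k).1
  have h2 : ∀ k : ℤ, z ^ 2 ≠ q ^ k := fun k => (hzq k).2.1
  have hz2 : z ^ 2 ≠ 0 := pow_ne_zero 2 hz
  have M := mAL_diff_identity hq hq0 hz h1 h2
  have e1 : jTheta (z⁻¹ * q) q = jTheta z q := by
    rw [← jTheta_div hq0 (z := z), div_eq_mul_inv, mul_comm]
  have e2 : jTheta (z ^ (-2 : ℤ) * q) q = jTheta (z ^ 2) q := by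
    rw [← jTheta_div hq0 (z := z ^ 2), div_eq_mul_inv, mul_comm, zpow_neg]
    norm_cast
  have e3 : jTheta (z * q) q = -z⁻¹ * jTheta z q := by rw [mul_comm, jTheta_mul hq hq0 hz]
  have e4 : jTheta (z ^ 2 * q) q = -(z ^ 2)⁻¹ * jTheta (z ^ 2) q := by
    rw [mul_comm, jTheta_mul hq hq0 hz2]
  rw [e1, e2, e3, e4, show z ^ (-2 : ℤ) = (z ^ 2)⁻¹ by rw [zpow_neg]; norm_cast,
    show z ^ (-3 : ℤ) = (z ^ 3)⁻¹ by rw [zpow_neg]; norm_cast]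
  have c1 : z ^ 2 * (-z⁻¹ * jTheta z q) = -(z * jTheta z q) := by field_simp
  have c2 : z ^ 2 * (-(z ^ 2)⁻¹ * jTheta (z ^ 2) q) = -jTheta (z ^ 2) q := by field_simp
  rw [c1, c2]
  linear_combination M
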